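/- Assume MA(σ-centered). Then there exists a proper dense subgroup G < Sym(Ω), for Ω countably infinite, acting transitively on the set of ℵ₀-sections of Ω, i.e. partitions of Ω into countably infinitely many infinite pieces, where g ∈ Sym(Ω) sends a partition 𝒫 to {g(A) : A ∈ 𝒫}. -/

import Mathlib

def Centered {P : Type} [Preorder P] (Q : Set P) : Prop :=
  ∀ S : Finset P, ↑S ⊆ Q → ∃ p : P, ∀ q ∈ S, q ≤ p

def SigmaCentered (P : Type) [Preorder P] : Prop :=
  ∃ C : ℕ → Set P, (∀ n, Centered (C n)) ∧ (⋃ n, C n) = Set.univ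

/-- Martin's Axiom for σ-centered partial orders: for any nonempty σ-centered partial order
and any family of fewer than continuum many open dense subsets, there is a filter meeting
every member of the family. -/
def MASigmaCentered : Prop :=
  ∀ (P : Type) [Preorder P], Nonempty P → SigmaCentered P →
    ∀ 𝒟 : Set (Set P),
      (∀ D ∈ 𝒟, (∀ p ∈ D, ∀ q, p ≤ q → q ∈ D) ∧ (∀ p, ∃ q ∈ D, p ≤ q)) →
      Cardinal.mk ↥𝒟 < Cardinal.continuum →
      ∃ Q : Set P, Q.Nonempty ∧
        (∀ q₀ ∈ Q, ∀ q₁ ∈ Q, ∃ q ∈ Q, q₀ ≤ q ∧ q₁ ≤ q) ∧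
        (∀ p q : P, p ≤ q → q ∈ Q → p ∈ Q) ∧
        ∀ D ∈ 𝒟, (Q ∩ D).Nonempty

/-- An `ℵ₀`-section of `Ω`: a partition of `Ω` into countably infinitely many infinite
pieces. -/
def IsAleph0Section {Ω : Type} (Pp : Set (Set Ω)) : Prop :=
  Pp.Countable ∧ Pp.Infinite ∧ (∀ A ∈ Pp, A.Infinite) ∧
    (∀ A ∈ Pp, ∀ B ∈ Pp, A ≠ B → Disjoint A B) ∧ ⋃₀ Pp = Set.univ

/-! By transfinite recursion of length `𝔠`, adjoin generators to the trivial group, one for each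
task `(r, s, p₀)`: the generator has to extend the finite partial map `p₀` and carry the
equivalence relation `r` to `s`. All the groups are kept cofinitary: nonidentity elements fix only
finitely many points. At each stage the group `G` built so far has fewer than `𝔠` elements, so
MA(σ-centered) provides a generic `g`. Its forcing conditions are finite partial maps together
with finitely many cyclically reduced words in `g` over `G` that are promised no further closed
trajectories. A new pair `(a, b)` keeps these promises as soon as `b` avoids finitely many values,
which is where cofinitarity of `G` enters. Every element of `⟨G, g⟩` is conjugate to an element of
`G` or to the value of a cyclically reduced word, whose fixed points start closed trajectories, so
`⟨G, g⟩` is again cofinitary. A cofinitary group is proper, since it contains no transposition. -/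

open Cardinal MulAction Equiv

universe u

section Trajectories

variable {G Ω I : Type*} [Group G] [MulAction G Ω] {σ : Perm I} {w : I → G × Bool}
  {p q : Set (Ω × Ω)}

/-- The action of `G` on `Ω` is cofinitary: nonidentity elements fix only finitely many points. -/
def IsCofinitary (G Ω : Type*) [Group G] [MulAction G Ω] : Prop :=
  ∀ k : G, k ≠ 1 → (fixedBy Ω k).Finite

/-- The pair of `p` used at place `i` by a closed trajectory `x` of the cyclic word `w`. The
permutation `σ` is the cyclic successor on the places of the word, a letter `(k, true)` stands for
`k * g` and `(k, false)` for `k * g⁻¹`, and `x i` is the image of `x (σ i)` under the letter `w i`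
once `p` is (a part of) the graph of `g`. -/
def trajectoryEdge (σ : Perm I) (w : I → G × Bool) (x : I → Ω) (i : I) : Ω × Ω :=
  if (w i).2 then (x (σ i), (w i).1⁻¹ • x i) else ((w i).1⁻¹ • x i, x (σ i))

/-- The closed trajectories of the cyclic word `w` when its variable is interpreted by the partial
map with graph `p`. -/
def closedTrajectories (σ : Perm I) (w : I → G × Bool) (p : Set (Ω × Ω)) : Set (I → Ω) :=
  {x | ∀ i, trajectoryEdge σ w x i ∈ p}

/-- A cyclic word is cyclically reduced if it contains no subword `g * 1 * g⁻¹` or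
`g⁻¹ * 1 * g`. -/
def IsCyclicallyReduced (σ : Perm I) (w : I → G × Bool) : Prop :=
  ∀ i, (w i).2 ≠ (w (σ i)).2 → (w (σ i)).1 ≠ 1

theorem closedTrajectories_mono (h : p ⊆ q) :
    closedTrajectories σ w p ⊆ closedTrajectories σ w q :=
  fun _ hx i => h (hx i)

theorem closedTrajectories_finite [Finite I] (hp : p.Finite) :
    (closedTrajectories σ w p).Finite := by
  refine (Set.Finite.pi' fun _ : I => (hp.image Prod.fst).union (hp.image Prod.snd)).subset ?_
  intro x hx i
  obtain ⟨j, rfl⟩ := σ.surjective i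
  have hj := hx j
  rw [trajectoryEdge] at hj
  split_ifs at hj
  · exact Or.inl ⟨_, hj, rfl⟩
  · exact Or.inr ⟨_, hj, rfl⟩

theorem exists_closedTrajectories_of_directedOn [Finite I] {ι : Type*} {f : ι → Set (Ω × Ω)}
    {c : Set ι} (hne : c.Nonempty) (hc : DirectedOn (fun i j => f i ⊆ f j) c) {x : I → Ω}
    (hx : x ∈ closedTrajectories σ w (⋃ i ∈ c, f i)) :
    ∃ i ∈ c, x ∈ closedTrajectories σ w (f i) := by
  have hfin := Set.finite_range (trajectoryEdge σ w x)
  have hsub : (hfin.toFinset : Set (Ω × Ω)) ⊆ ⋃ i ∈ c, f i := by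
    rw [hfin.coe_toFinset]
    exact Set.range_subset_iff.2 hx
  obtain ⟨i, hi, h⟩ := DirectedOn.exists_mem_subset_of_finset_subset_biUnion hne hc hsub
  rw [hfin.coe_toFinset] at h
  exact ⟨i, hi, Set.range_subset_iff.1 h⟩

theorem closedTrajectories_flip :
    closedTrajectories σ (fun i => ((w i).1, !(w i).2)) (Prod.swap ⁻¹' p) =
      closedTrajectories σ w p := by
  ext x
  refine forall_congr' fun i => ?_
  cases h : (w i).2 <;> simp [trajectoryEdge, h]

/- A trajectory using `(a, b)` passes through `b`, and just before or after this it moves `b` by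
a coefficient `k`. As `k • b` and `k⁻¹ • b` are not in `K`, this coefficient fixes `b`, so it is
`1`, and `w` goes through `(a, b)` and directly back, against reducedness. -/
theorem closedTrajectories_insert_subset (hw : IsCyclicallyReduced σ w) {K : Set Ω}
    (hp : p ⊆ K ×ˢ K) {a b : Ω} (ha : a ∈ K) (hsmul : ∀ i, (w i).1 • b ∉ K)
    (hinv_smul : ∀ i, (w i).1⁻¹ • b ∉ K) (hfix : ∀ i, (w i).1 ≠ 1 → (w i).1 • b ≠ b) :
    closedTrajectories σ w (insert (a, b) p) ⊆ closedTrajectories σ w p := by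
  intro x hx i
  have hfst (j : I) : (trajectoryEdge σ w x j).1 ∈ K := by
    rcases hx j with h | h
    · rwa [h]
    · exact (hp h).1
  have hsnd (j : I) : (trajectoryEdge σ w x j).2 = b ∨ (trajectoryEdge σ w x j).2 ∈ K := by
    rcases hx j with h | h
    · exact Or.inl (by rw [h])
    · exact Or.inr (hp h).2
  refine (hx i).resolve_left fun hi => ?_
  cases hei : (w i).2 with
  | true =>
    obtain ⟨j, rfl⟩ := σ.surjective i
    have hxb : x (σ j) = (w (σ j)).1 • b := by
      simp only [trajectoryEdge, hei, if_true, Prod.mk.injEq] at hi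
      exact inv_smul_eq_iff.1 hi.2
    cases hej : (w j).2 with
    | true => exact hsmul (σ j) (by simpa [trajectoryEdge, hej, hxb] using hfst j)
    | false =>
      have hret := hsnd j
      simp only [trajectoryEdge, hej, Bool.false_eq_true, if_false, hxb] at hret
      exact hret.elim (hfix _ (hw j (by simp [hei, hej]))) (hsmul _)
  | false =>
    have hxb : x (σ i) = b := by
      simp only [trajectoryEdge, hei, Bool.false_eq_true, if_false, Prod.mk.injEq] at hi
      exact hi.2
    cases hej : (w (σ i)).2 with
    | true =>
      have hret := hsnd (σ i)
      simp only [trajectoryEdge, hej, if_true, hxb] at hret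
      refine hret.elim (fun h => ?_) (hinv_smul _)
      exact hfix _ (hw i (by simp [hei, hej])) (inv_smul_eq_iff.1 h).symm
    | false => exact hinv_smul (σ i) (by simpa [trajectoryEdge, hej, hxb] using hfst (σ i))

end Trajectories

section PartialIso

variable {α β : Type*} {r : Setoid α} {s : Setoid β} {p : Set (α × β)} {a : α} {b : β}

/-- The equivalence relation `r` has infinitely many classes, all of them infinite. On a countable
type this means that its classes form an `ℵ₀`-section. -/
structure HasInfiniteClasses (r : Setoid α) : Prop where
  infinite_quotient : Infinite (Quotient r)
  infinite_class (x : α) : {y | r y x}.Infinite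

/-- The set of pairs `p` is the graph of a partial injection that preserves and reflects
equivalence. -/
def IsPartialIso (r : Setoid α) (s : Setoid β) (p : Set (α × β)) : Prop :=
  ∀ u ∈ p, ∀ v ∈ p, (u.1 = v.1 ↔ u.2 = v.2) ∧ (r u.1 v.1 ↔ s u.2 v.2)

namespace IsPartialIso

theorem swap (hp : IsPartialIso r s p) : IsPartialIso s r (Prod.swap ⁻¹' p) :=
  fun _ hu _ hv => ⟨(hp _ hu _ hv).1.symm, (hp _ hu _ hv).2.symm⟩

theorem insert (hp : IsPartialIso r s p) (ha : ∀ u ∈ p, u.1 ≠ a) (hb : ∀ u ∈ p, u.2 ≠ b)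
    (hab : ∀ u ∈ p, r u.1 a ↔ s u.2 b) : IsPartialIso r s (insert (a, b) p) := by
  rintro u (rfl | hu) v (rfl | hv)
  · simp
  · exact ⟨iff_of_false (ha v hv).symm (hb v hv).symm,
      r.comm'.trans ((hab v hv).trans s.comm')⟩
  · exact ⟨iff_of_false (ha u hu) (hb u hu), hab u hu⟩
  · exact hp u hu v hv

theorem exists_forall_rel_iff [Infinite (Quotient s)] (hp : IsPartialIso r s p) (hfin : p.Finite)
    (a : α) : ∃ m, ∀ u ∈ p, r u.1 a ↔ s u.2 m := by
  by_cases h : ∃ v ∈ p, r v.1 a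
  · obtain ⟨v, hv, hva⟩ := h
    refine ⟨v.2, fun u hu => Iff.trans ?_ (hp u hu v hv).2⟩
    exact ⟨fun hua => r.trans' hua (r.symm' hva), fun huv => r.trans' huv hva⟩
  · obtain ⟨m, hm⟩ := (hfin.image fun u => (Quotient.mk s u.2)).exists_notMem
    refine ⟨m.out, fun u hu => iff_of_false (fun hua => h ⟨u, hu, hua⟩) fun hum => hm ⟨u, hu, ?_⟩⟩
    exact (Quotient.sound hum).trans m.out_eq

theorem exists_insert (hs : HasInfiniteClasses s) (hp : IsPartialIso r s p) (hfin : p.Finite)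
    (ha : ∀ u ∈ p, u.1 ≠ a) {B : Set β} (hB : B.Finite) :
    ∃ b ∉ B, IsPartialIso r s (Insert.insert (a, b) p) := by
  have := hs.infinite_quotient
  obtain ⟨m, hm⟩ := hp.exists_forall_rel_iff hfin a
  obtain ⟨b, hbm, hb⟩ :=
    (hs.infinite_class m).exists_notMem_finite (hB.union (hfin.image Prod.snd))
  refine ⟨b, fun h => hb (Or.inl h), hp.insert ha (fun u hu h => hb (Or.inr ⟨u, hu, h⟩)) ?_⟩
  intro u hu
  exact (hm u hu).trans ⟨fun h => s.trans' h (s.symm' hbm), fun h => s.trans' h hbm⟩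

theorem exists_equiv (hp : IsPartialIso r s p) (hdom : ∀ a, ∃ u ∈ p, u.1 = a)
    (hran : ∀ b, ∃ u ∈ p, u.2 = b) : ∃ g : α ≃ β, {u : α × β | g u.1 = u.2} = p := by
  choose e hep hea using hdom
  have hinj : Function.Injective fun a => (e a).2 := fun a a' h => by
    rw [← hea a, ← hea a', (hp _ (hep a) _ (hep a')).1]
    exact h
  have hval : ∀ u ∈ p, (e u.1).2 = u.2 := fun u hu => (hp _ (hep _) u hu).1.1 (hea _)
  have hsurj : Function.Surjective fun a => (e a).2 := fun b => by
    obtain ⟨u, hu, rfl⟩ := hran b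
    exact ⟨u.1, hval u hu⟩
  refine ⟨Equiv.ofBijective _ ⟨hinj, hsurj⟩, Set.ext fun u => ⟨fun h => ?_, hval u⟩⟩
  have : e u.1 = u := Prod.ext (hea _) h
  exact this ▸ hep u.1

end IsPartialIso

end PartialIso

section Extension

variable {G Ω : Type*} [Group G] [MulAction G Ω] {r s : Setoid Ω} {p : Set (Ω × Ω)}

theorem exists_insert_fst_closedTrajectories_subset (hG : IsCofinitary G Ω)
    (hs : HasInfiniteClasses s) (hp : IsPartialIso r s p) (hfin : p.Finite) {N : Set G}
    (hN : N.Finite) {a : Ω} (ha : ∀ u ∈ p, u.1 ≠ a) :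
    ∃ b, IsPartialIso r s (insert (a, b) p) ∧ ∀ {I : Type} {σ : Perm I} {w : I → G × Bool},
      IsCyclicallyReduced σ w → (∀ i, (w i).1 ∈ N) →
        closedTrajectories σ w (insert (a, b) p) ⊆ closedTrajectories σ w p := by
  let K : Set Ω := insert a (Prod.fst '' p ∪ Prod.snd '' p)
  have hK : K.Finite := ((hfin.image _).union (hfin.image _)).insert a
  have hpK : p ⊆ K ×ˢ K := fun u hu =>
    ⟨Or.inr (Or.inl ⟨u, hu, rfl⟩), Or.inr (Or.inr ⟨u, hu, rfl⟩)⟩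
  let bad (k : G) : Set Ω := {b | k • b ∈ K} ∪ {b | k⁻¹ • b ∈ K} ∪ {b | k ≠ 1 ∧ k • b = b}
  have hbad (k : G) : (bad k).Finite := by
    refine ((hK.preimage (MulAction.injective k).injOn).union
      (hK.preimage (MulAction.injective k⁻¹).injOn)).union ?_
    by_cases hk : k = 1
    · simp [hk]
    · exact (hG k hk).subset fun b hb => hb.2
  obtain ⟨b, hb, hpb⟩ := hp.exists_insert hs hfin ha (hN.biUnion fun k _ => hbad k)
  have hb' : ∀ k ∈ N, b ∉ bad k := fun k hk h => hb (Set.mem_biUnion hk h)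
  refine ⟨b, hpb, fun {I σ w} hw hwN => ?_⟩
  exact closedTrajectories_insert_subset hw hpK (Set.mem_insert _ _)
    (fun i h => hb' _ (hwN i) (Or.inl (Or.inl h))) (fun i h => hb' _ (hwN i) (Or.inl (Or.inr h)))
    (fun i h h' => hb' _ (hwN i) (Or.inr ⟨h, h'⟩))

theorem exists_insert_snd_closedTrajectories_subset (hG : IsCofinitary G Ω)
    (hr : HasInfiniteClasses r) (hp : IsPartialIso r s p) (hfin : p.Finite) {N : Set G}
    (hN : N.Finite) {b : Ω} (hb : ∀ u ∈ p, u.2 ≠ b) :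
    ∃ a, IsPartialIso r s (insert (a, b) p) ∧ ∀ {I : Type} {σ : Perm I} {w : I → G × Bool},
      IsCyclicallyReduced σ w → (∀ i, (w i).1 ∈ N) →
        closedTrajectories σ w (insert (a, b) p) ⊆ closedTrajectories σ w p := by
  obtain ⟨a, ha, hsub⟩ := exists_insert_fst_closedTrajectories_subset hG hr hp.swap
    (hfin.preimage Prod.swap_injective.injOn) hN (a := b) fun u hu => hb _ hu
  have hswap : insert (b, a) (Prod.swap ⁻¹' p) = Prod.swap ⁻¹' (insert (a, b) p) := by
    ext ⟨x, y⟩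
    simp [and_comm]
  rw [hswap] at ha hsub
  refine ⟨a, ha.swap, fun {I σ w} hw hwN => ?_⟩
  have hw' : IsCyclicallyReduced σ fun i => ((w i).1, !(w i).2) :=
    fun i hi => hw i fun h => hi (by simp only [h])
  simpa only [closedTrajectories_flip] using hsub hw' hwN

end Extension

section Forcing

theorem MASigmaCentered.exists_directedOn (hMA : MASigmaCentered) {P ι : Type} [Preorder P]
    [Nonempty P] (hP : SigmaCentered P) (hι : #ι < 𝔠) (D : ι → Set P)
    (hD : ∀ i, IsUpperSet (D i)) (hdense : ∀ i p, ∃ q ∈ D i, p ≤ q) :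
    ∃ Q : Set P, Q.Nonempty ∧ DirectedOn (· ≤ ·) Q ∧ ∀ i, (Q ∩ D i).Nonempty := by
  obtain ⟨Q, hne, hdir, -, hQ⟩ := hMA P ‹_› hP (Set.range D)
    (Set.forall_mem_range.2 fun i => ⟨fun p hp q hpq => hD i hpq hp, hdense i⟩)
    (mk_range_le.trans_lt hι)
  exact ⟨Q, hne, hdir, fun i => hQ _ ⟨i, rfl⟩⟩

/-- The cyclically reduced cyclic words with coefficients in `G`, as lists of letters read
cyclically. -/
abbrev ReducedWord (G : Type*) [Group G] : Type _ :=
  {L : List (G × Bool) // IsCyclicallyReduced (finRotate L.length) L.get}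

/-- The closed trajectories of a reduced word when its variable is interpreted by the partial map
with graph `p`. -/
abbrev ReducedWord.trajectories {G Ω : Type*} [Group G] [MulAction G Ω] (w : ReducedWord G)
    (p : Set (Ω × Ω)) : Set (Fin w.1.length → Ω) :=
  closedTrajectories (finRotate w.1.length) w.1.get p

theorem mk_list_prod_bool_lt {α : Type u} {κ : Cardinal.{u}} (hκ : ℵ₀ < κ) (hα : #α < κ) :
    #(List (α × Bool)) < κ := by
  refine (mk_list_le_max _).trans_lt (max_lt hκ ?_)
  rw [mk_prod, lift_uzero]
  exact mul_lt_of_lt hκ.le hα (by simpa using ofNat_lt_aleph0.trans hκ)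

variable {G Ω : Type} [Group G] [MulAction G Ω] {r s : Setoid Ω} {p₀ : Finset (Ω × Ω)}

/-- The forcing conditions for a permutation extending `p₀` and carrying `r` to `s`: finite
approximations of its graph, together with finitely many words which are promised to acquire no
further closed trajectories. -/
structure Condition (G : Type) {Ω : Type} [Group G] [MulAction G Ω] (r s : Setoid Ω)
    (p₀ : Finset (Ω × Ω)) : Type where
  graph : Finset (Ω × Ω)
  words : Finset (ReducedWord G)
  isPartialIso : IsPartialIso r s (graph : Set (Ω × Ω))
  base_subset : p₀ ⊆ graph

namespace Condition

instance : Preorder (Condition G r s p₀) where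
  le q q' := q.graph ⊆ q'.graph ∧ q.words ⊆ q'.words ∧
    ∀ w ∈ q.words, w.trajectories (q'.graph : Set (Ω × Ω)) ⊆ w.trajectories q.graph
  le_refl q := ⟨subset_rfl, subset_rfl, fun _ _ => subset_rfl⟩
  le_trans _ _ _ h h' := ⟨h.1.trans h'.1, h.2.1.trans h'.2.1,
    fun w hw => (h'.2.2 w (h.2.1 hw)).trans (h.2.2 w hw)⟩

/-- The base `p₀` as a condition without promises. -/
def base (h₀ : IsPartialIso r s (p₀ : Set (Ω × Ω))) : Condition G r s p₀ :=
  ⟨p₀, ∅, h₀, subset_rfl⟩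

theorem sigmaCentered [Countable Ω] (h₀ : IsPartialIso r s (p₀ : Set (Ω × Ω))) :
    SigmaCentered (Condition G r s p₀) := by
  classical
  obtain ⟨code, hcode⟩ := exists_injective_nat (Finset (Ω × Ω))
  refine ⟨fun n => {q | code q.graph = n}, fun n S hS => ?_,
    Set.iUnion_eq_univ_iff.2 fun q => ⟨_, rfl⟩⟩
  rcases S.eq_empty_or_nonempty with rfl | ⟨q, hq⟩
  · exact ⟨base h₀, by simp⟩
  · refine ⟨⟨q.graph, S.biUnion words, q.isPartialIso, q.base_subset⟩, fun q' hq' => ?_⟩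
    have hgraph : q'.graph = q.graph := hcode ((hS hq').trans (hS hq).symm)
    exact ⟨hgraph.subset, Finset.subset_biUnion_of_mem words hq', fun w _ => by rw [hgraph]⟩

/-- The coefficients of the words of a condition. -/
def coefficients (q : Condition G r s p₀) : Set G :=
  ⋃ w ∈ q.words, Prod.fst '' {l | l ∈ w.1}

theorem finite_coefficients (q : Condition G r s p₀) : q.coefficients.Finite :=
  q.words.finite_toSet.biUnion fun w _ => w.1.finite_toSet.image _

theorem exists_le_mem_graph (q : Condition G r s p₀) {u : Ω × Ω}
    (hu : IsPartialIso r s (insert u (q.graph : Set (Ω × Ω))))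
    (hsub : ∀ {I : Type} {σ : Perm I} {w : I → G × Bool}, IsCyclicallyReduced σ w →
      (∀ i, (w i).1 ∈ q.coefficients) →
        closedTrajectories σ w (insert u (q.graph : Set (Ω × Ω))) ⊆
          closedTrajectories σ w q.graph) :
    ∃ q', u ∈ q'.graph ∧ q ≤ q' := by
  classical
  refine ⟨⟨insert u q.graph, q.words, by rwa [Finset.coe_insert],
    q.base_subset.trans (Finset.subset_insert _ _)⟩, Finset.mem_insert_self _ _,
    Finset.subset_insert _ _, subset_rfl, fun w hw => ?_⟩
  rw [Finset.coe_insert]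
  exact hsub w.2 fun i => Set.mem_biUnion hw ⟨_, w.1.get_mem i, rfl⟩

theorem exists_le_fst_eq (hG : IsCofinitary G Ω) (hs : HasInfiniteClasses s) (a : Ω)
    (q : Condition G r s p₀) : ∃ q', (∃ u ∈ q'.graph, u.1 = a) ∧ q ≤ q' := by
  by_cases ha : ∃ u ∈ q.graph, u.1 = a
  · exact ⟨q, ha, le_rfl⟩
  · obtain ⟨b, hb, hsub⟩ := exists_insert_fst_closedTrajectories_subset hG hs q.isPartialIso
      q.graph.finite_toSet q.finite_coefficients fun u hu h => ha ⟨u, hu, h⟩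
    obtain ⟨q', hq', hle⟩ := q.exists_le_mem_graph hb hsub
    exact ⟨q', ⟨_, hq', rfl⟩, hle⟩

theorem exists_le_snd_eq (hG : IsCofinitary G Ω) (hr : HasInfiniteClasses r) (b : Ω)
    (q : Condition G r s p₀) : ∃ q', (∃ u ∈ q'.graph, u.2 = b) ∧ q ≤ q' := by
  by_cases hb : ∃ u ∈ q.graph, u.2 = b
  · exact ⟨q, hb, le_rfl⟩
  · obtain ⟨a, ha, hsub⟩ := exists_insert_snd_closedTrajectories_subset hG hr q.isPartialIso
      q.graph.finite_toSet q.finite_coefficients fun u hu h => hb ⟨u, hu, h⟩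
    obtain ⟨q', hq', hle⟩ := q.exists_le_mem_graph ha hsub
    exact ⟨q', ⟨_, hq', rfl⟩, hle⟩

theorem exists_le_mem_words (w : ReducedWord G) (q : Condition G r s p₀) :
    ∃ q', w ∈ q'.words ∧ q ≤ q' := by
  classical
  exact ⟨⟨q.graph, insert w q.words, q.isPartialIso, q.base_subset⟩,
    Finset.mem_insert_self _ _, subset_rfl, Finset.subset_insert _ _, fun _ _ => subset_rfl⟩

theorem exists_generic [Countable Ω] (hMA : MASigmaCentered) (hG : IsCofinitary G Ω)
    (hcard : #G < 𝔠) (hr : HasInfiniteClasses r) (hs : HasInfiniteClasses s)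
    (h₀ : IsPartialIso r s (p₀ : Set (Ω × Ω))) :
    ∃ Q : Set (Condition G r s p₀), Q.Nonempty ∧ DirectedOn (· ≤ ·) Q ∧
      (∀ a, ∃ q ∈ Q, ∃ u ∈ q.graph, u.1 = a) ∧ (∀ b, ∃ q ∈ Q, ∃ u ∈ q.graph, u.2 = b) ∧
      ∀ w, ∃ q ∈ Q, w ∈ q.words := by
  let D : Ω ⊕ Ω ⊕ ReducedWord G → Set (Condition G r s p₀) :=
    Sum.elim (fun a => {q | ∃ u ∈ q.graph, u.1 = a}) <|
      Sum.elim (fun b => {q | ∃ u ∈ q.graph, u.2 = b}) fun w => {q | w ∈ q.words}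
  have hΩ : #Ω < 𝔠 := mk_le_aleph0.trans_lt aleph0_lt_continuum
  have hindex : #(Ω ⊕ Ω ⊕ ReducedWord G) < 𝔠 := by
    simp only [mk_sum, lift_id]
    exact add_lt_of_lt aleph0_le_continuum hΩ
      (add_lt_of_lt aleph0_le_continuum hΩ
        ((mk_subtype_le _).trans_lt (mk_list_prod_bool_lt aleph0_lt_continuum hcard)))
  have : Nonempty (Condition G r s p₀) := ⟨base h₀⟩
  obtain ⟨Q, hne, hdir, hQ⟩ := hMA.exists_directedOn (sigmaCentered h₀) hindex D
    (by
      rintro (a | b | w) q q' hle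
      · exact fun ⟨u, hu, h⟩ => ⟨u, hle.1 hu, h⟩
      · exact fun ⟨u, hu, h⟩ => ⟨u, hle.1 hu, h⟩
      · exact fun hw => hle.2.1 hw)
    (by
      rintro (a | b | w)
      · exact exists_le_fst_eq hG hs a
      · exact exists_le_snd_eq hG hr b
      · exact exists_le_mem_words w)
  exact ⟨Q, hne, hdir, fun a => hQ (.inl a), fun b => hQ (.inr (.inl b)),
    fun w => hQ (.inr (.inr w))⟩

theorem isPartialIso_biUnion_graph {Q : Set (Condition G r s p₀)} (hQ : DirectedOn (· ≤ ·) Q) :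
    IsPartialIso r s (⋃ q ∈ Q, (q.graph : Set (Ω × Ω))) := by
  intro u hu v hv
  obtain ⟨q, hq, hu⟩ := Set.mem_iUnion₂.1 hu
  obtain ⟨q', hq', hv⟩ := Set.mem_iUnion₂.1 hv
  obtain ⟨t, -, hqt, hqt'⟩ := hQ q hq q' hq'
  exact t.isPartialIso u (hqt.1 hu) v (hqt'.1 hv)

theorem trajectories_biUnion_graph_subset {Q : Set (Condition G r s p₀)}
    (hQ : DirectedOn (· ≤ ·) Q) {q : Condition G r s p₀} (hq : q ∈ Q) {w : ReducedWord G}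
    (hw : w ∈ q.words) :
    w.trajectories (⋃ q ∈ Q, (q.graph : Set (Ω × Ω))) ⊆ w.trajectories q.graph := by
  intro x hx
  obtain ⟨q', hq', hx'⟩ := exists_closedTrajectories_of_directedOn ⟨q, hq⟩
    (hQ.mono fun _ _ h => Finset.coe_subset.2 h.1) hx
  obtain ⟨t, -, hqt, hqt'⟩ := hQ q hq q' hq'
  exact hqt.2.2 w hw (closedTrajectories_mono (Finset.coe_subset.2 hqt'.1) hx')

end Condition

theorem exists_perm_trajectories_finite [Countable Ω] (hMA : MASigmaCentered)
    (hG : IsCofinitary G Ω) (hcard : #G < 𝔠) (hr : HasInfiniteClasses r)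
    (hs : HasInfiniteClasses s) (h₀ : IsPartialIso r s (p₀ : Set (Ω × Ω))) :
    ∃ g : Perm Ω, (∀ u ∈ p₀, g u.1 = u.2) ∧ s.comap g = r ∧
      ∀ w : ReducedWord G, (w.trajectories {u | g u.1 = u.2}).Finite := by
  obtain ⟨Q, ⟨q₀, hq₀⟩, hdir, hdom, hran, hwords⟩ :=
    Condition.exists_generic hMA hG hcard hr hs h₀
  have hiso := Condition.isPartialIso_biUnion_graph hdir
  obtain ⟨g, hg⟩ := hiso.exists_equiv
    (fun a => let ⟨q, hq, u, hu, h⟩ := hdom a; ⟨u, Set.mem_biUnion hq hu, h⟩)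
    (fun b => let ⟨q, hq, u, hu, h⟩ := hran b; ⟨u, Set.mem_biUnion hq hu, h⟩)
  refine ⟨g, fun u hu => ?_, Setoid.ext fun x y => ?_, fun w => ?_⟩
  · exact hg.ge (Set.mem_biUnion hq₀ (q₀.base_subset hu))
  · exact ((hg ▸ hiso) (x, g x) rfl (y, g y) rfl).2.symm
  · obtain ⟨q, hq, hw⟩ := hwords w
    rw [hg]
    exact (closedTrajectories_finite q.graph.finite_toSet).subset
      (Condition.trajectories_biUnion_graph_subset hdir hq hw)

end Forcing

section Rotation

variable {α : Type*}

theorem coe_finRotate_eq_mod {n : ℕ} (i : Fin n) : (finRotate n i : ℕ) = (i + 1) % n := by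
  have := i.neZero
  rw [finRotate_apply, Fin.val_add, Fin.val_one', Nat.add_mod_mod]

theorem exists_isRotated_get_cons_get_finRotate {L : List α} {i : Fin L.length}
    (hi : finRotate _ i ≠ i) : ∃ t, L ~r L.get i :: L.get (finRotate _ i) :: t := by
  have hlen : 2 ≤ (L.rotate i).length := by
    rw [List.length_rotate]
    by_contra! hlt
    have : Subsingleton (Fin L.length) := Fin.subsingleton_iff_le_one.2 (by lia)
    exact hi (Subsingleton.elim _ _)
  refine ⟨(L.rotate i).drop 2, i, ?_⟩
  rw [← List.drop_zero (l := L.rotate i), List.drop_eq_getElem_cons (by lia),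
    List.drop_eq_getElem_cons (by lia)]
  simp only [List.getElem_rotate, List.get_eq_getElem, coe_finRotate_eq_mod, Nat.zero_add,
    Nat.mod_eq_of_lt i.2, Nat.add_comm 1, List.drop_succ_cons, List.drop_zero]

theorem isConj_prod_of_isRotated {M : Type*} [Group M] {L L' : List M} (h : L ~r L') :
    IsConj L.prod L'.prod := by
  obtain ⟨n, hn, rfl⟩ := List.isRotated_iff_mod.1 h
  rw [List.rotate_eq_drop_append_take hn, List.prod_append, isConj_iff]
  refine ⟨(L.take n).prod⁻¹, ?_⟩
  rw [← L.prod_take_mul_prod_drop n]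
  group

end Rotation

section WordProd

variable {Γ : Type*} [Group Γ] {G : Subgroup Γ} {g : Γ} {L : List (G × Bool)}

/-- The value of a word with coefficients in `G` at `g`, where the letters `(k, true)` and
`(k, false)` stand for `k * g` and `k * g⁻¹`. -/
def wordProd (g : Γ) (L : List (G × Bool)) : Γ :=
  (L.map fun l => (l.1 : Γ) * if l.2 then g else g⁻¹).prod

theorem wordProd_nil : wordProd g ([] : List (G × Bool)) = 1 := rfl

theorem wordProd_cons (l : G × Bool) (L : List (G × Bool)) :
    wordProd g (l :: L) = l.1 * (if l.2 then g else g⁻¹) * wordProd g L := by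
  simp only [wordProd, List.map_cons, List.prod_cons]

theorem mul_wordProd_cons (k : G) (l : G × Bool) (L : List (G × Bool)) :
    k * wordProd g (l :: L) = wordProd g ((k * l.1, l.2) :: L) := by
  simp only [wordProd_cons, Subgroup.coe_mul, mul_assoc]

theorem wordProd_cons_cons_of_ne {l l' : G × Bool} (hne : l.2 ≠ l'.2) (hone : l'.1 = 1)
    (L : List (G × Bool)) : wordProd g (l :: l' :: L) = l.1 * wordProd g L := by
  rw [wordProd_cons, wordProd_cons, hone]
  cases hl : l.2 <;> cases hl' : l'.2 <;> simp_all [mul_assoc]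

theorem wordProd_take_succ (i : Fin L.length) :
    wordProd g (L.take (i + 1)) =
      wordProd g (L.take i) * ((L.get i).1 * if (L.get i).2 then g else g⁻¹) := by
  rw [wordProd, wordProd, List.take_succ_eq_append_getElem i.2, List.map_append, List.prod_append,
    List.map_singleton, List.prod_singleton, List.get_eq_getElem]

theorem exists_wordProd_mul_of_mem_closure {u : Γ}
    (hu : u ∈ Subgroup.closure (insert g (G : Set Γ))) :
    ∃ (L : List (G × Bool)) (k : G), u = wordProd g L * k := by
  have mul_left (y : G) {v : Γ} : (∃ (L : List (G × Bool)) (k : G), v = wordProd g L * k) →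
      ∃ (L : List (G × Bool)) (k : G), y * v = wordProd g L * k := by
    rintro ⟨_ | ⟨l, L⟩, k, rfl⟩
    · exact ⟨[], y * k, by simp [wordProd_nil]⟩
    · exact ⟨(y * l.1, l.2) :: L, k, by rw [← mul_assoc, mul_wordProd_cons]⟩
  induction hu using Subgroup.closure_induction_left with
  | one => exact ⟨[], 1, by simp [wordProd_nil]⟩
  | mul_left y hy v _ ih =>
    rcases hy with rfl | hy
    · obtain ⟨L, k, rfl⟩ := ih
      exact ⟨(1, true) :: L, k, by simp [wordProd_cons, mul_assoc]⟩
    · exact mul_left ⟨y, hy⟩ ih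
  | inv_mul_cancel y hy v _ ih =>
    rcases hy with rfl | hy
    · obtain ⟨L, k, rfl⟩ := ih
      exact ⟨(1, false) :: L, k, by simp [wordProd_cons, mul_assoc]⟩
    · exact mul_left ⟨y, hy⟩⁻¹ ih

theorem exists_isConj_wordProd_of_not_isCyclicallyReduced
    (hL : ¬IsCyclicallyReduced (finRotate L.length) L.get) :
    ∃ (t : List (G × Bool)) (k : G), t.length < L.length ∧
      IsConj (wordProd g L) (k * wordProd g t) := by
  simp only [IsCyclicallyReduced, not_forall, not_not] at hL
  obtain ⟨i, hi, hone⟩ := hL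
  obtain ⟨t, ht⟩ := exists_isRotated_get_cons_get_finRotate (L := L) (i := i)
    fun h => hi (by rw [h])
  refine ⟨t, (L.get i).1, by simp [ht.perm.length_eq], ?_⟩
  rw [← wordProd_cons_cons_of_ne hi hone]
  exact isConj_prod_of_isRotated (ht.map _)

theorem exists_isConj_mem_or_reducedWord (L : List (G × Bool)) (k : G) :
    ∃ v, IsConj (k * wordProd g L) v ∧
      (v ∈ G ∨ ∃ w : ReducedWord G, w.1 ≠ [] ∧ v = wordProd g w.1) := by
  induction hn : L.length using Nat.strong_induction_on generalizing L k with
  | _ n ih =>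
    rcases L with _ | ⟨l, L⟩
    · exact ⟨k, by rw [wordProd_nil, mul_one], .inl k.2⟩
    rw [mul_wordProd_cons]
    by_cases hred : IsCyclicallyReduced (finRotate _) (List.get ((k * l.1, l.2) :: L))
    · exact ⟨_, .refl _, .inr ⟨⟨_, hred⟩, List.cons_ne_nil _ _, rfl⟩⟩
    · obtain ⟨t, k', hlt, hconj⟩ :=
        exists_isConj_wordProd_of_not_isCyclicallyReduced (g := g) hred
      obtain ⟨v, hv, h⟩ := ih t.length (hn ▸ hlt) t k' rfl
      exact ⟨v, hconj.trans hv, h⟩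

end WordProd

section Closure

variable {Γ Ω : Type*} [Group Γ] [MulAction Γ Ω] {G : Subgroup Γ} {g : Γ}

theorem finite_fixedBy_of_isConj {u v : Γ} (h : IsConj u v) (hv : (fixedBy Ω v).Finite) :
    (fixedBy Ω u).Finite := by
  obtain ⟨c, rfl⟩ := isConj_iff.1 h
  rw [← smul_fixedBy] at hv
  exact Set.finite_smul_set.1 hv

theorem exists_mem_trajectories_of_mem_fixedBy {w : ReducedWord G} (hw : 0 < w.1.length) {y : Ω}
    (hy : y ∈ fixedBy Ω (wordProd g w.1)) :
    ∃ x ∈ w.trajectories {u : Ω × Ω | g • u.1 = u.2}, x ⟨0, hw⟩ = y := by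
  let x (i : Fin w.1.length) : Ω := (wordProd g (w.1.take i))⁻¹ • y
  have hsucc (i : Fin w.1.length) : x (finRotate _ i) = (wordProd g (w.1.take (i + 1)))⁻¹ • y := by
    rcases (Nat.add_one_le_of_lt i.2).lt_or_eq with h | h
    · simp only [x, coe_finRotate_eq_mod, Nat.mod_eq_of_lt h]
    · have h₀ : (finRotate _ i : ℕ) = 0 := by rw [coe_finRotate_eq_mod, h, Nat.mod_self]
      simp only [x, h₀, List.take_zero, wordProd_nil, inv_one, one_smul]
      rw [List.take_of_length_le h.ge, eq_inv_smul_iff]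
      exact hy
  refine ⟨x, fun i => ?_, by simp only [x, List.take_zero, wordProd_nil, inv_one, one_smul]⟩
  have hstep : (w.1.get i).1⁻¹ • x i = (if (w.1.get i).2 then g else g⁻¹) • x (finRotate _ i) := by
    rw [hsucc, wordProd_take_succ, mul_inv_rev, mul_inv_rev, mul_smul, mul_smul, smul_inv_smul]
    rfl
  cases hi : (w.1.get i).2 <;>
    simp only [trajectoryEdge, hi, if_true, Bool.false_eq_true, if_false, Set.mem_ofPred_eq, hstep,
      smul_inv_smul]

theorem finite_fixedBy_wordProd {w : ReducedWord G} (hne : w.1 ≠ [])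
    (hfin : (w.trajectories {u : Ω × Ω | g • u.1 = u.2}).Finite) :
    (fixedBy Ω (wordProd g w.1)).Finite := by
  have hpos := List.length_pos_of_ne_nil hne
  refine (hfin.image fun x => x ⟨0, hpos⟩).subset fun y hy => ?_
  exact exists_mem_trajectories_of_mem_fixedBy hpos hy

theorem isCofinitary_closure_insert (hG : IsCofinitary G Ω)
    (hg : ∀ w : ReducedWord G, (w.trajectories {u : Ω × Ω | g • u.1 = u.2}).Finite) :
    IsCofinitary (Subgroup.closure (insert g (G : Set Γ))) Ω := by
  rintro ⟨u, hu⟩ hne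
  obtain ⟨L, k, rfl⟩ := exists_wordProd_mul_of_mem_closure hu
  obtain ⟨v, hv, h⟩ := exists_isConj_mem_or_reducedWord (g := g) L k
  have hconj : IsConj (wordProd g L * k) v :=
    .trans (isConj_iff.2 ⟨k, by group⟩) hv
  change (fixedBy Ω (wordProd g L * k)).Finite
  refine finite_fixedBy_of_isConj hconj ?_
  rcases h with hvG | ⟨w, hw, rfl⟩
  · refine hG ⟨v, hvG⟩ fun h => hne (Subtype.ext ?_)
    have hv₁ : v = 1 := congrArg Subtype.val h
    exact isConj_one_left.1 (hv₁ ▸ hconj)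
  · exact finite_fixedBy_wordProd hw (hg w)

theorem mk_closure_lt {Γ : Type u} [Group Γ] {κ : Cardinal.{u}} (hκ : ℵ₀ < κ) {S : Set Γ}
    (hS : #S < κ) : #(Subgroup.closure S) < κ := by
  have hle : #(Subgroup.closure S) ≤ #(FreeGroup S) := by
    rw [FreeGroup.closure_eq_range]
    exact mk_range_le
  exact (hle.trans mk_quot_le).trans_lt (mk_list_prod_bool_lt hκ hS)

theorem isCofinitary_iSup_of_directed {ι : Sort*} {H : ι → Subgroup Γ} (hdir : Directed (· ≤ ·) H)
    (hH : ∀ i, IsCofinitary (H i) Ω) : IsCofinitary (⨆ i, H i : Subgroup Γ) Ω := by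
  rintro ⟨u, hu⟩ hne
  cases isEmpty_or_nonempty ι with
  | inl _ => exact absurd (Subtype.ext (by simpa [iSup_of_empty] using hu)) hne
  | inr _ =>
    obtain ⟨i, hi⟩ := (Subgroup.mem_iSup_of_directed hdir).1 hu
    exact hH i ⟨u, hi⟩ fun h => hne (Subtype.ext (congrArg (fun v : H i => (v : Γ)) h))

end Closure

section Recursion

theorem exists_forall_restrict_Iio {T α : Type*} [Preorder T] [WellFoundedLT T]
    {R : ∀ t : T, (Set.Iio t → α) → α → Prop} (hR : ∀ t f, ∃ a, R t f a) :
    ∃ γ : T → α, ∀ t, R t (fun s => γ s) (γ t) := by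
  choose F hF using hR
  let γ : T → α := WellFounded.fix (wellFounded_lt (α := T)) fun t ih => F t fun s => ih s s.2
  have hγ (t : T) : γ t = F t fun s => γ s := WellFounded.fix_eq _ _ _
  exact ⟨γ, fun t => hγ t ▸ hF _ _⟩

variable {Γ Ω T : Type*} [Group Γ] [MulAction Γ Ω] [LinearOrder T]

theorem isCofinitary_closure_image {γ : T → Γ} {A : Set T} (hA : IsLowerSet A)
    (h : ∀ s ∈ A, IsCofinitary (Subgroup.closure (γ '' Set.Iic s)) Ω) :
    IsCofinitary (Subgroup.closure (γ '' A)) Ω := by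
  have hmono : Monotone fun s : A => Subgroup.closure (γ '' Set.Iic (s : T)) :=
    fun s t hst => Subgroup.closure_mono (Set.image_mono (Set.Iic_subset_Iic.2 hst))
  have hsup : Subgroup.closure (γ '' A) = ⨆ s : A, Subgroup.closure (γ '' Set.Iic (s : T)) := by
    rw [← Subgroup.closure_iUnion, ← Set.image_iUnion]
    congr 2
    ext t
    simp only [Set.mem_iUnion, Set.mem_Iic]
    exact ⟨fun ht => ⟨⟨t, ht⟩, le_rfl⟩, fun ⟨s, hs⟩ => hA hs s.2⟩
  rw [hsup]
  exact isCofinitary_iSup_of_directed hmono.directed_le fun s => h s s.2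

theorem exists_isCofinitary_forall_exists_mem {Γ J : Type u} [Group Γ] [MulAction Γ Ω]
    {κ : Cardinal.{u}} (hκ : ℵ₀ < κ) (hJ : #J ≤ κ) {A : J → Set Γ}
    (hA : ∀ G : Subgroup Γ, IsCofinitary G Ω → #G < κ → ∀ j,
      ∃ g ∈ A j, IsCofinitary (Subgroup.closure (insert g (G : Set Γ))) Ω) :
    ∃ G : Subgroup Γ, IsCofinitary G Ω ∧ ∀ j, ∃ g ∈ G, g ∈ A j := by
  obtain ⟨_, _, hJ_ord⟩ := exists_ord_eq_type_lt J
  have hstep (j : J) (f : Set.Iio j → Γ) : ∃ g, IsCofinitary (Subgroup.closure (Set.range f)) Ω →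
      g ∈ A j ∧ IsCofinitary (Subgroup.closure (insert g (Set.range f))) Ω := by
    by_cases hf : IsCofinitary (Subgroup.closure (Set.range f)) Ω
    · have hcard : #(Set.range f) < κ := (mk_range_le.trans_lt (mk_Iio_lt j hJ_ord)).trans_le hJ
      obtain ⟨g, hg, hcof⟩ := hA _ hf (mk_closure_lt hκ hcard) j
      rw [Set.insert_eq, Subgroup.closure_union, Subgroup.closure_eq, ← Subgroup.closure_union,
        ← Set.insert_eq] at hcof
      exact ⟨g, fun _ => ⟨hg, hcof⟩⟩
    · exact ⟨1, fun h => absurd h hf⟩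
  obtain ⟨γ, hγ⟩ := exists_forall_restrict_Iio hstep
  replace hγ (j : J) (hj : IsCofinitary (Subgroup.closure (γ '' Set.Iio j)) Ω) :
      γ j ∈ A j ∧ IsCofinitary (Subgroup.closure (γ '' Set.Iic j)) Ω := by
    rw [Set.image_eq_range] at hj
    have := hγ j hj
    rwa [← Set.image_eq_range, ← Set.image_insert_eq, Set.Iio_insert] at this
  have hcof (j : J) : IsCofinitary (Subgroup.closure (γ '' Set.Iic j)) Ω := by
    induction j using WellFoundedLT.induction with
    | _ j ih => exact (hγ j (isCofinitary_closure_image (isLowerSet_Iio j) ih)).2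
  refine ⟨Subgroup.closure (γ '' Set.univ),
    isCofinitary_closure_image isLowerSet_univ fun j _ => hcof j, fun j => ?_⟩
  exact ⟨γ j, Subgroup.subset_closure ⟨j, trivial, rfl⟩,
    (hγ j (isCofinitary_closure_image (isLowerSet_Iio j) fun i _ => hcof i)).1⟩

end Recursion

section Sections

variable {α β : Type*}

theorem IsPartialIso.of_subset_graph {s : Setoid β} {h : α → β} (hh : Function.Injective h)
    {p : Set (α × β)} (hp : ∀ u ∈ p, h u.1 = u.2) : IsPartialIso (s.comap h) s p := by
  intro u hu v hv
  rw [← hp u hu, ← hp v hv]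
  exact ⟨hh.eq_iff.symm, Iff.rfl⟩

theorem HasInfiniteClasses.comap {s : Setoid β} (hs : HasInfiniteClasses s) (e : α ≃ β) :
    HasInfiniteClasses (s.comap e) where
  infinite_quotient := by
    have := hs.infinite_quotient
    refine Infinite.of_surjective (Quotient.map' (s₁ := s.comap e) e fun _ _ h => h) ?_
    rintro ⟨y⟩
    exact ⟨Quotient.mk'' (e.symm y), congrArg Quotient.mk'' (e.apply_symm_apply y)⟩
  infinite_class x := (hs.infinite_class (e x)).preimage (by simp)

theorem exists_hasInfiniteClasses (α : Type*) [Countable α] [Infinite α] :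
    ∃ r : Setoid α, HasInfiniteClasses r := by
  obtain ⟨e⟩ : Nonempty (α ≃ ℕ × ℕ) := nonempty_equiv_of_countable
  have hfst : HasInfiniteClasses (Setoid.ker (Prod.fst : ℕ × ℕ → ℕ)) := by
    refine ⟨?_, fun x => ?_⟩
    · exact (Setoid.quotientKerEquivOfSurjective _ Prod.fst_surjective).infinite_iff.2 inferInstance
    · exact Set.infinite_of_injective_forall_mem (Prod.mk_right_injective x.1) fun _ => rfl
  exact ⟨_, hfst.comap e⟩

theorem image_image_classes_comap (s : Setoid β) (e : α ≃ β) :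
    (fun A => e '' A) '' (s.comap e).classes = s.classes := by
  have himage (x : α) : e '' {y | s.comap e y x} = {y | s y (e x)} := by
    ext y
    simp [Equiv.image_eq_preimage_symm, Setoid.comap_rel]
  ext A
  constructor
  · rintro ⟨_, ⟨x, rfl⟩, rfl⟩
    exact ⟨e x, himage x⟩
  · rintro ⟨y, rfl⟩
    exact ⟨_, ⟨e.symm y, rfl⟩, by simp [himage]⟩

theorem IsAleph0Section.exists_classes_eq {Ω : Type} {P : Set (Set Ω)} (hP : IsAleph0Section P) :
    ∃ r : Setoid Ω, HasInfiniteClasses r ∧ r.classes = P := by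
  obtain ⟨-, hinf, hmem, hdisj, hcover⟩ := hP
  have hpart : Setoid.IsPartition P :=
    ⟨fun h => (hmem ∅ h).nonempty.ne_empty rfl, Setoid.eqv_classes_of_disjoint_union hcover hdisj⟩
  have hclasses := Setoid.classes_mkClasses P hpart
  refine ⟨Setoid.mkClasses P hpart.2, ⟨?_, fun x => hmem _ ?_⟩, hclasses⟩
  · rw [← hclasses] at hinf
    exact (Setoid.quotientEquivClasses _).infinite_iff.2 hinf.to_subtype
  · exact Setoid.eqv_class_mem hpart.2

theorem mk_setoid_le_continuum [Countable α] : #(Setoid α) ≤ 𝔠 := by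
  have hinj : Function.Injective fun r : Setoid α => {u : α × α | r u.1 u.2} :=
    fun r s h => Setoid.ext fun x y => Set.ext_iff.1 h (x, y)
  calc #(Setoid α) ≤ #(Set (α × α)) := mk_le_of_injective hinj
    _ = 2 ^ #(α × α) := mk_set
    _ ≤ 𝔠 := by
      rw [← two_power_aleph0]
      exact power_le_power_left two_ne_zero mk_le_aleph0

end Sections

section Main

theorem ne_top_of_isCofinitary {Ω : Type*} [Infinite Ω] {G : Subgroup (Perm Ω)}
    (hG : IsCofinitary G Ω) : G ≠ ⊤ := by
  classical
  rintro rfl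
  obtain ⟨a, b, hab⟩ := exists_pair_ne Ω
  have hfin := hG ⟨swap a b, trivial⟩ fun h => hab (swap_eq_one_iff.1 (congrArg Subtype.val h))
  refine Set.infinite_univ ((hfin.union (Set.toFinite {a, b})).subset fun x _ => ?_)
  by_cases hx : x = a ∨ x = b
  · exact Or.inr hx
  · exact Or.inl (swap_apply_of_ne_of_ne (fun h => hx (.inl h)) fun h => hx (.inr h))

theorem exists_isCofinitary_forall_exists_comap_eq {Ω : Type} [Countable Ω]
    (hMA : MASigmaCentered) :
    ∃ G : Subgroup (Perm Ω), IsCofinitary G Ω ∧ ∀ {r s : Setoid Ω} {p₀ : Finset (Ω × Ω)},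
      HasInfiniteClasses r → HasInfiniteClasses s → IsPartialIso r s (p₀ : Set (Ω × Ω)) →
        ∃ g ∈ G, (∀ u ∈ p₀, g u.1 = u.2) ∧ s.comap g = r := by
  let J := {t : Setoid Ω × Setoid Ω × Finset (Ω × Ω) // HasInfiniteClasses t.1 ∧
    HasInfiniteClasses t.2.1 ∧ IsPartialIso t.1 t.2.1 (t.2.2 : Set (Ω × Ω))}
  have hJ : #J ≤ 𝔠 := by
    refine (mk_subtype_le _).trans ?_
    simp only [mk_prod, lift_id]
    exact mul_le_of_le aleph0_le_continuum mk_setoid_le_continuum <|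
      mul_le_of_le aleph0_le_continuum mk_setoid_le_continuum <|
        mk_le_aleph0.trans aleph0_le_continuum
  obtain ⟨G, hG, hmem⟩ := exists_isCofinitary_forall_exists_mem (Ω := Ω) aleph0_lt_continuum hJ
    (A := fun t => {g : Perm Ω | (∀ u ∈ t.1.2.2, g u.1 = u.2) ∧ t.1.2.1.comap g = t.1.1})
    fun G hG hcard t => by
      obtain ⟨g, hext, hcomap, hfin⟩ :=
        exists_perm_trajectories_finite hMA hG hcard t.2.1 t.2.2.1 t.2.2.2
      exact ⟨g, ⟨hext, hcomap⟩, isCofinitary_closure_insert hG hfin⟩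
  exact ⟨G, hG, fun hr hs hp₀ => hmem ⟨(_, _, _), hr, hs, hp₀⟩⟩

end Main

/-- (MA(σ-centered)) There exists a proper dense subgroup `G < Sym(Ω)` (Ω countably
infinite) acting transitively on the `ℵ₀`-sections of `Ω`, where `g` sends a partition `Pp`
to `{g '' A : A ∈ Pp}`. -/
theorem stmt_17 (Ω : Type) [Countable Ω] [Infinite Ω] (hMA : MASigmaCentered) :
    ∃ G : Subgroup (Equiv.Perm Ω), G ≠ ⊤ ∧
      (∀ h : Equiv.Perm Ω, ∀ S : Finset Ω, ∃ g ∈ G, ∀ a ∈ S, g a = h a) ∧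
      ∀ Pp Pq : Set (Set Ω), IsAleph0Section Pp → IsAleph0Section Pq →
        ∃ g ∈ G, (fun A : Set Ω => (g : Equiv.Perm Ω) '' A) '' Pp = Pq := by
  classical
  obtain ⟨G, hG, hcarry⟩ := exists_isCofinitary_forall_exists_comap_eq (Ω := Ω) hMA
  refine ⟨G, ne_top_of_isCofinitary hG, fun h S => ?_, fun P P' hP hP' => ?_⟩
  · obtain ⟨s, hs⟩ := exists_hasInfiniteClasses Ω
    have hgraph : IsPartialIso (s.comap h) s (S.image fun a => (a, h a) : Finset (Ω × Ω)) :=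
      .of_subset_graph h.injective (by simp)
    obtain ⟨g, hg, hext, -⟩ := hcarry (hs.comap h) hs hgraph
    exact ⟨g, hg, fun a ha => hext (a, h a) (Finset.mem_image_of_mem _ ha)⟩
  · obtain ⟨r, hr, rfl⟩ := hP.exists_classes_eq
    obtain ⟨s, hs, rfl⟩ := hP'.exists_classes_eq
    obtain ⟨g, hg, -, rfl⟩ := hcarry hr hs (p₀ := ∅) (by simp [IsPartialIso])
    exact ⟨g, hg, image_image_classes_comap s g⟩
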